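/- Rectangular symmetry of Kostka numbers: for partitions λ = (i^{w_i})_{1≤i≤n} and λ̂ = (i^{w_{n+1-i}})_{1≤i≤n} obtained by complementing within an (n+1) × (Σ w_i) rectangle, and partitions μ', μ̂' related by the complementary relation μ_i + μ̂_{n-i+2} = Σ_{1≤j≤n} w_j, the Kostka numbers agree: K_{λ, μ'} = K_{λ̂, μ̂'}. -/

import Mathlib

/-!
Recording, for each `k`, the column heights of the part of a tableau with entries less than `k`
turns the tableau into a chain of vectors `H 0 = 0, H 1, …, H N`, whose `k`-th step raises as many
coordinates by one as there are entries equal to `k`. Complementation `H k c ↦ k - H k c.rev` is a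
bijection onto the chains of the complementary shape, with step sizes `m - cont k`. For the content
`μ'` these are the parts of `μ̂'` in reversed order, so it remains to see that Kostka numbers do not
depend on the order of the content. With `ρ` the staircase, the number of chains ending in `v` is
the coefficient of `e^(v + ρ)` in `a_ρ ∏ e_(cont k)`: multiplication by `e_(cont k)` is the last
step of a chain, and the vectors that are not weakly decreasing drop out because the coefficients
of an alternating element vanish on vectors with two equal coordinates. The product is commutative.
-/

open Finset

/-- The Kostka number: the number of semistandard Young tableaux of shape `lam` in which the
value `k` appears exactly `content k` times. -/
noncomputable def kostka (lam : YoungDiagram) (content : ℕ → ℕ) : ℕ :=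
  Nat.card {T : SemistandardYoungTableau lam //
    ∀ k : ℕ, (lam.cells.filter (fun c => T c.1 c.2 = k)).card = content k}

section Alternating

open AddMonoidAlgebra (single)

variable {ι : Type*} [Fintype ι]

variable (ι) in
/-- The elementary symmetric function `e_a`, written in the group ring of `ι → ℤ`: the squarefree
monomial with variables in `s` is the formal exponential of the indicator vector of `s`. -/
noncomputable def elemSymm (a : ℕ) : AddMonoidAlgebra ℤ (ι → ℤ) :=
  ∑ s ∈ powersetCard a (univ : Finset ι), single ((s : Set ι).indicator 1) 1

theorem coeff_mul_elemSymm (x : AddMonoidAlgebra ℤ (ι → ℤ)) (a : ℕ) (v : ι → ℤ) :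
    (x * elemSymm ι a).coeff v =
      ∑ s ∈ powersetCard a (univ : Finset ι), x.coeff (v - (s : Set ι).indicator 1) := by
  simp [elemSymm, mul_sum, AddMonoidAlgebra.coeff_sum, sub_eq_add_neg]

variable [DecidableEq ι]

/-- Alternating elements of the group ring of the lattice `ι → ℤ`: permuting the coordinates of an
exponent by `τ` multiplies its coefficient by `sign τ`. -/
def IsAlternating (x : AddMonoidAlgebra ℤ (ι → ℤ)) : Prop :=
  ∀ (τ : Equiv.Perm ι) (v : ι → ℤ), x.coeff (v ∘ τ) = Equiv.Perm.sign τ * x.coeff v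

/-- The alternant `a_ρ = ∑_σ sign(σ) e^{ρ ∘ σ}`, as in Weyl's character formula. -/
noncomputable def alternant (ρ : ι → ℤ) : AddMonoidAlgebra ℤ (ι → ℤ) :=
  ∑ σ : Equiv.Perm ι, single (ρ ∘ σ) (Equiv.Perm.sign σ : ℤ)

theorem coeff_alternant (ρ v : ι → ℤ) :
    (alternant ρ).coeff v =
      ∑ σ : Equiv.Perm ι, if ρ ∘ σ = v then (Equiv.Perm.sign σ : ℤ) else 0 := by
  simp [alternant, AddMonoidAlgebra.coeff_sum, Finsupp.single_apply]

theorem isAlternating_alternant (ρ : ι → ℤ) : IsAlternating (alternant ρ) := by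
  intro τ v
  rw [coeff_alternant, coeff_alternant, mul_sum]
  refine Fintype.sum_equiv (Equiv.mulRight τ⁻¹) _ _ fun σ ↦ ?_
  have hσ : ρ ∘ (σ * τ⁻¹) = v ↔ ρ ∘ σ = v ∘ τ := by
    rw [Equiv.Perm.coe_mul, ← Function.comp_assoc, Equiv.Perm.inv_def, Equiv.comp_symm_eq]
  have hsign : (Equiv.Perm.sign τ * Equiv.Perm.sign (σ * τ⁻¹) : ℤ) = Equiv.Perm.sign σ := by
    rw [← Units.val_mul, Equiv.Perm.sign_mul, Equiv.Perm.sign_inv, mul_comm, mul_assoc,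
      Int.units_mul_self, mul_one]
  simp only [Equiv.coe_mulRight, hσ, mul_ite, hsign, mul_zero]

namespace IsAlternating

variable {x : AddMonoidAlgebra ℤ (ι → ℤ)}

theorem mul_elemSymm (hx : IsAlternating x) (a : ℕ) : IsAlternating (x * elemSymm ι a) := by
  intro τ v
  rw [coeff_mul_elemSymm, coeff_mul_elemSymm, mul_sum]
  refine sum_equiv τ.finsetCongr (by simp [mem_powersetCard]) fun s _ ↦ ?_
  classical
  rw [← hx]
  congr 1
  ext c
  simp [Set.indicator_apply]

theorem mul_prod_elemSymm {κ : Type*} (hx : IsAlternating x) (s : Finset κ) (a : κ → ℕ) :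
    IsAlternating (x * ∏ k ∈ s, elemSymm ι (a k)) := by
  induction s using Finset.cons_induction with
  | empty => simpa using hx
  | cons k s hk ih =>
    rw [prod_cons, mul_left_comm, mul_comm]
    exact ih.mul_elemSymm (a k)

theorem coeff_eq_zero (hx : IsAlternating x) {v : ι → ℤ} {i j : ι} (hij : i ≠ j)
    (hv : v i = v j) : x.coeff v = 0 := by
  have hswap := hx (Equiv.swap i j) v
  have hfix : v ∘ Equiv.swap i j = v := by
    rw [Equiv.comp_swap_eq_update, hv, Function.update_eq_self, ← hv, Function.update_eq_self]
  rw [hfix, Equiv.Perm.sign_swap hij, Units.val_neg, Units.val_one] at hswap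
  linarith

end IsAlternating

end Alternating

section Staircase

variable {m : ℕ} {u v : Fin m → ℤ}

/-- The staircase vector `ρ = (0, -1, …, 1 - m)`, which makes weakly decreasing vectors strictly
decreasing. -/
def staircase (m : ℕ) : Fin m → ℤ := fun c ↦ -c

theorem strictAnti_staircase : StrictAnti (staircase m) :=
  fun _ _ hij ↦ neg_lt_neg (Nat.cast_lt.2 hij)

theorem coeff_alternant_staircase (hv : Antitone v) :
    (alternant (staircase m)).coeff (v + staircase m) = if v = 0 then 1 else 0 := by
  rw [coeff_alternant, sum_eq_single 1]
  · simp
  · intro σ _ hσ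
    refine if_neg fun h ↦ hσ (Equiv.coe_fn_injective ?_)
    have hmono : StrictMono σ := fun i j hij ↦ by
      have hlt : (staircase m ∘ σ) j < (staircase m ∘ σ) i :=
        h ▸ hv.add_strictAnti strictAnti_staircase hij
      exact strictAnti_staircase.lt_iff_gt.1 hlt
    exact (hmono.range_inj strictMono_id).1 (by simp [σ.surjective.range_eq])
  · simp

-- Removing a vertical strip puts adjacent coordinates out of order by at most one, which is the
-- step of the staircase.
theorem exists_add_staircase_eq (hv : Antitone v) (huv : u ≤ v) (hvu : v ≤ u + 1)
    (hu : ¬ Antitone u) : ∃ i j, i ≠ j ∧ (u + staircase m) i = (u + staircase m) j := by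
  obtain _ | m := m
  · exact absurd (Subsingleton.antitone u) hu
  rw [Fin.antitone_iff_succ_le] at hu
  push Not at hu
  obtain ⟨i, hi⟩ := hu
  refine ⟨i.castSucc, i.succ, i.castSucc_lt_succ.ne, ?_⟩
  have hvi := hv i.castSucc_lt_succ.le
  have hle := huv i.succ
  have hge := hvu i.castSucc
  simp only [Pi.add_apply, Pi.one_apply, staircase, Fin.val_castSucc, Fin.val_succ] at hge ⊢
  lia

end Staircase

theorem exists_eq_add_indicator {ι : Type*} [Finite ι] {u v : ι → ℤ} (huv : u ≤ v)
    (hvu : v ≤ u + 1) : ∃ s : Finset ι, v = u + (s : Set ι).indicator 1 := by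
  classical
  have := Fintype.ofFinite ι
  refine ⟨univ.filter fun c ↦ u c < v c, funext fun c ↦ ?_⟩
  have hle := huv c
  have hge := hvu c
  simp only [Pi.add_apply, Pi.one_apply, Set.indicator_apply, mem_coe, mem_filter_univ] at hge ⊢
  split_ifs <;> lia

theorem sub_indicator_one_le {ι : Type*} (v : ι → ℤ) (s : Set ι) : v - s.indicator 1 ≤ v :=
  sub_le_self v (Set.indicator_nonneg fun _ _ ↦ zero_le_one)

theorem le_sub_indicator_one_add_one {ι : Type*} (v : ι → ℤ) (s : Set ι) :
    v ≤ v - s.indicator 1 + 1 := by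
  rw [sub_add_eq_add_sub, le_sub_iff_add_le, add_le_add_iff_left]
  exact Set.indicator_le_self' fun _ _ ↦ zero_le_one

theorem sum_indicator_one {ι : Type*} [Fintype ι] (s : Finset ι) :
    ∑ i, (s : Set ι).indicator (1 : ι → ℤ) i = #s := by
  classical
  simp [Set.indicator_apply]

section HeightChain

variable {m N : ℕ} {cont cont' : ℕ → ℕ} {v v' : Fin m → ℤ} {H : ℕ → Fin m → ℤ}

/-- A chain of `N` steps from the zero vector to `v` through weakly decreasing vectors, the `k`-th
of which raises exactly `cont k` of the coordinates, each by one. Such chains encode semistandard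
tableaux with at most `m` columns: `H k` lists the heights of the columns of the subtableau of
entries less than `k`. From index `N` on, `H` is constant. -/
structure IsHeightChain (cont : ℕ → ℕ) (N : ℕ) (v : Fin m → ℤ) (H : ℕ → Fin m → ℤ) : Prop where
  zero : H 0 = 0
  antitone : ∀ k, Antitone (H k)
  le_succ : ∀ k, H k ≤ H (k + 1)
  succ_le : ∀ k, H (k + 1) ≤ H k + 1
  sum_succ : ∀ k < N, ∑ c, H (k + 1) c = ∑ c, H k c + cont k
  eq_of_ge : ∀ k ≥ N, H k = v

namespace IsHeightChain

theorem antitone_last (h : IsHeightChain cont N v H) : Antitone v :=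
  h.eq_of_ge N le_rfl ▸ h.antitone N

theorem monotone (h : IsHeightChain cont N v H) : Monotone H :=
  monotone_nat_of_le_succ h.le_succ

theorem le_last (h : IsHeightChain cont N v H) (k : ℕ) : H k ≤ v :=
  h.eq_of_ge (max k N) (le_max_right k N) ▸ h.monotone (le_max_left k N)

theorem truncate (h : IsHeightChain cont (N + 1) v H) :
    IsHeightChain cont N (H N) fun k ↦ H (min k N) where
  zero := by simpa using h.zero
  antitone k := h.antitone _
  le_succ k := h.monotone (min_le_min_right N k.le_succ)
  succ_le k := by
    obtain hk | hk := lt_or_ge k N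
    · simpa [hk.le, Nat.succ_le_of_lt hk] using h.succ_le k
    · simp [hk, hk.trans k.le_succ]
  sum_succ k hk := by
    simpa [hk.le, Nat.succ_le_of_lt hk] using h.sum_succ k (hk.trans N.lt_succ_self)
  eq_of_ge k hk := by simp [hk]

theorem extend {s : Finset (Fin m)} (hv : Antitone v) (hs : #s = cont N)
    (h : IsHeightChain cont N (v - (s : Set (Fin m)).indicator 1) H) :
    IsHeightChain cont (N + 1) v fun k ↦ if k ≤ N then H k else v where
  zero := by simpa using h.zero
  antitone k := by
    split_ifs
    exacts [h.antitone k, hv]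
  le_succ k := by
    obtain hk | rfl | hk := lt_trichotomy k N
    · simpa [hk.le, Nat.succ_le_of_lt hk] using h.le_succ k
    · simpa [h.eq_of_ge k le_rfl] using sub_indicator_one_le v s
    · simp [hk.not_ge, hk.not_gt]
  succ_le k := by
    obtain hk | rfl | hk := lt_trichotomy k N
    · simpa [hk.le, Nat.succ_le_of_lt hk] using h.succ_le k
    · simpa [h.eq_of_ge k le_rfl] using le_sub_indicator_one_add_one v s
    · simp [hk.not_ge, hk.not_gt]
  sum_succ k hk := by
    obtain hk | rfl := Nat.lt_succ_iff_lt_or_eq.1 hk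
    · simpa [hk.le, Nat.succ_le_of_lt hk] using h.sum_succ k hk
    · simp [h.eq_of_ge k le_rfl, ← hs, sum_indicator_one]
  eq_of_ge k hk := if_neg (by lia)

theorem compl (h : IsHeightChain cont N v H) (hcont : ∀ k < N, cont k + cont' k = m)
    (hv : ∀ c, v c + v' c.rev = N) :
    IsHeightChain cont' N v' fun k c ↦ (min k N : ℕ) - H k c.rev where
  zero := by ext; simp [h.zero]
  antitone k i j hij := sub_le_sub_left (h.antitone k (Fin.rev_le_rev.2 hij)) _
  le_succ k c := by
    obtain hk | hk := lt_or_ge k N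
    · have := h.succ_le k c.rev
      simp only [hk.le, Nat.succ_le_of_lt hk, min_eq_left, Pi.add_apply, Pi.one_apply] at this ⊢
      push_cast
      linarith
    · simp [hk, hk.trans k.le_succ, h.eq_of_ge _ hk, h.eq_of_ge _ (hk.trans k.le_succ)]
  succ_le k c := by
    have := h.le_succ k c.rev
    simp only [Pi.add_apply, Pi.one_apply]
    lia
  sum_succ k hk := by
    have hrev (k : ℕ) : ∑ c : Fin m, H k c.rev = ∑ c, H k c := Equiv.sum_comp Fin.revPerm (H k)
    have hm : (cont k + cont' k : ℤ) = m := mod_cast hcont k hk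
    simp only [hk.le, Nat.succ_le_of_lt hk, min_eq_left, sum_sub_distrib, hrev, sum_const,
      card_univ, Fintype.card_fin, nsmul_eq_mul, h.sum_succ k hk, ← hm]
    push_cast
    ring
  eq_of_ge k hk := by
    ext c
    have := hv c.rev
    simp [hk, h.eq_of_ge k hk, ← this]

end IsHeightChain

theorem card_isHeightChain_compl (hcont : ∀ k < N, cont k + cont' k = m)
    (hv : ∀ c, v c + v' c.rev = N) :
    Nat.card {H // IsHeightChain cont N v H} = Nat.card {H // IsHeightChain cont' N v' H} := by
  have hcont' (k : ℕ) (hk : k < N) : cont' k + cont k = m := by rw [add_comm, hcont k hk]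
  have hv' (c : Fin m) : v' c + v c.rev = N := by simpa [add_comm] using hv c.rev
  exact Nat.card_congr
    { toFun := fun H ↦ ⟨_, H.2.compl hcont hv⟩
      invFun := fun H ↦ ⟨_, H.2.compl hcont' hv'⟩
      left_inv := fun H ↦ by ext; simp
      right_inv := fun H ↦ by ext; simp }

theorem bijective_extend (hv : Antitone v) : Function.Bijective
    fun p : Σ s : powersetCard (cont N) (univ : Finset (Fin m)),
      {H // IsHeightChain cont N (v - (s.1 : Set (Fin m)).indicator 1) H} ↦
        (⟨_, p.2.2.extend hv (mem_powersetCard.1 p.1.2).2⟩ :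
          {H // IsHeightChain cont (N + 1) v H}) := by
  constructor
  · rintro ⟨⟨s, hs⟩, H, hH⟩ ⟨⟨t, ht⟩, K, hK⟩ heq
    have hle (k : ℕ) (hk : k ≤ N) : H k = K k := by
      simpa [hk] using congrFun (congrArg Subtype.val heq) k
    obtain rfl : s = t := by
      have hN := hle N le_rfl
      rw [hH.eq_of_ge N le_rfl, hK.eq_of_ge N le_rfl, sub_right_inj] at hN
      exact coe_injective (Set.indicator_one_inj ℤ hN)
    obtain rfl : H = K := by
      funext k
      obtain hk | hk := le_total k N
      · exact hle k hk
      · rw [hH.eq_of_ge k hk, hK.eq_of_ge k hk]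
    rfl
  · rintro ⟨H, hH⟩
    have hlast : H (N + 1) = v := hH.eq_of_ge _ le_rfl
    obtain ⟨s, hs⟩ := exists_eq_add_indicator (hlast ▸ hH.le_succ N) (hlast ▸ hH.succ_le N)
    have hcard : #s = cont N := by
      have := hH.sum_succ N N.lt_succ_self
      rw [hlast, hs] at this
      simpa [sum_add_distrib, sum_indicator_one] using this
    have htrunc := hH.truncate
    rw [eq_sub_of_add_eq hs.symm] at htrunc
    refine ⟨⟨⟨s, by simp [hcard]⟩, _, htrunc⟩, Subtype.ext (funext fun k ↦ ?_)⟩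
    obtain hk | hk := le_or_gt k N
    · simp [hk]
    · simp [hk.not_ge, hH.eq_of_ge k hk]

instance finite_isHeightChain : Finite {H // IsHeightChain cont N v H} := by
  induction N generalizing v with
  | zero =>
    have (H K : {H // IsHeightChain cont 0 v H}) : H = K := Subtype.ext <| funext fun k ↦
      (H.2.eq_of_ge k k.zero_le).trans (K.2.eq_of_ge k k.zero_le).symm
    have := Subsingleton.intro this
    infer_instance
  | succ N ih =>
    by_cases hv : Antitone v
    · exact .of_surjective _ (bijective_extend hv).surjective
    · have : IsEmpty {H // IsHeightChain cont (N + 1) v H} := ⟨fun H ↦ hv H.2.antitone_last⟩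
      infer_instance

theorem isHeightChain_zero_iff : IsHeightChain cont 0 v H ↔ H = 0 ∧ v = 0 := by
  refine ⟨fun h ↦ ?_, ?_⟩
  · have hv : v = 0 := (h.eq_of_ge 0 le_rfl).symm.trans h.zero
    exact ⟨funext fun k ↦ (h.eq_of_ge k k.zero_le).trans hv, hv⟩
  · rintro ⟨rfl, rfl⟩
    exact ⟨rfl, fun _ ↦ antitone_const, fun _ ↦ le_rfl, fun _ ↦ by simp, by simp, fun _ _ ↦ rfl⟩

theorem card_isHeightChain (hv : Antitone v) :
    (Nat.card {H // IsHeightChain cont N v H} : ℤ) =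
      (alternant (staircase m) * ∏ k ∈ range N, elemSymm (Fin m) (cont k)).coeff
        (v + staircase m) := by
  induction N generalizing v with
  | zero =>
    rw [range_zero, prod_empty, mul_one, coeff_alternant_staircase hv]
    simp only [isHeightChain_zero_iff]
    split_ifs with h <;> simp [h]
  | succ N ih =>
    have hrec := Nat.card_eq_of_bijective _ (bijective_extend (cont := cont) (N := N) hv)
    rw [← hrec, Nat.card_sigma, sum_coe_sort (powersetCard (cont N) univ) fun s : Finset (Fin m) ↦
      Nat.card {H // IsHeightChain cont N (v - (s : Set (Fin m)).indicator 1) H}, prod_range_succ,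
      ← mul_assoc, coeff_mul_elemSymm, Nat.cast_sum]
    refine sum_congr rfl fun s _ ↦ ?_
    rw [← sub_add_eq_add_sub]
    by_cases hu : Antitone (v - (s : Set (Fin m)).indicator 1)
    · exact ih hu
    · have : IsEmpty {H // IsHeightChain cont N (v - (s : Set (Fin m)).indicator 1) H} :=
        ⟨fun H ↦ hu H.2.antitone_last⟩
      obtain ⟨i, j, hij, heq⟩ := exists_add_staircase_eq hv
        (sub_indicator_one_le v s)
        (le_sub_indicator_one_add_one v s) hu
      rw [Nat.card_of_isEmpty, Nat.cast_zero,
        ((isAlternating_alternant _).mul_prod_elemSymm _ _).coeff_eq_zero hij heq]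

theorem card_isHeightChain_perm (hv : Antitone v) (σ : Equiv.Perm (Fin N))
    (hσ : ∀ k : Fin N, cont' k = cont (σ k)) :
    Nat.card {H // IsHeightChain cont' N v H} = Nat.card {H // IsHeightChain cont N v H} := by
  rw [← Nat.cast_inj (R := ℤ), card_isHeightChain hv, card_isHeightChain hv, prod_range, prod_range]
  simp only [hσ]
  rw [Equiv.prod_comp σ fun k : Fin N ↦ elemSymm (Fin m) (cont k)]

end HeightChain

section Tableau

variable {m N k r c : ℕ} {cont : ℕ → ℕ} {H : ℕ → Fin m → ℤ} {lam : YoungDiagram}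

theorem col_lt_of_rowLen_zero_le (hm : lam.rowLen 0 ≤ m) (hrc : (r, c) ∈ lam) : c < m :=
  (YoungDiagram.mem_iff_lt_rowLen.1 hrc).trans_le ((lam.rowLen_anti 0 r r.zero_le).trans hm)

variable (m) in
/-- The heights of the columns of the subtableau formed by the entries of `T` less than `k`,
in the first `m` columns. -/
def columnHeights (T : SemistandardYoungTableau lam) (k : ℕ) (c : Fin m) : ℤ :=
  #{r ∈ range (lam.colLen c) | T r c < k}

section columnHeights

variable {T : SemistandardYoungTableau lam}

theorem lt_columnHeights_iff {c : Fin m} (hrc : (r, (c : ℕ)) ∈ lam) :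
    (r : ℤ) < columnHeights m T k c ↔ T r c < k := by
  rw [columnHeights, Nat.cast_lt]
  have hr := YoungDiagram.mem_iff_lt_colLen.1 hrc
  constructor <;> contrapose!
  · intro hk
    refine (card_le_card fun i hi ↦ ?_).trans (card_range r).le
    rw [mem_filter, mem_range, ← YoungDiagram.mem_iff_lt_colLen] at hi
    by_contra hri
    exact (hi.2.trans_le hk).not_ge (T.col_weak (not_lt.1 (mem_range.not.1 hri)) hi.1)
  · contrapose!
    intro hk
    refine (card_range (r + 1)).ge.trans (card_le_card fun i hi ↦ ?_)
    have hir := Nat.lt_succ_iff.1 (mem_range.1 hi)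
    exact mem_filter.2 ⟨mem_range.2 (hir.trans_lt hr), (T.col_weak hir hrc).trans_lt hk⟩

theorem columnHeights_succ (c : Fin m) :
    columnHeights m T (k + 1) c =
      columnHeights m T k c + #{r ∈ range (lam.colLen c) | T r c = k} := by
  have hdisj : Disjoint {r ∈ range (lam.colLen c) | T r c < k}
      {r ∈ range (lam.colLen c) | T r c = k} :=
    disjoint_filter.2 fun _ _ ↦ ne_of_lt
  rw [columnHeights, columnHeights, ← Nat.cast_add, ← card_union_of_disjoint hdisj, ← filter_or]
  simp only [Nat.lt_succ_iff_lt_or_eq]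

theorem card_filter_col_eq_le_one (c : ℕ) : #{r ∈ range (lam.colLen c) | T r c = k} ≤ 1 := by
  refine card_le_one.2 fun i hi j hj ↦ ?_
  simp only [mem_filter, mem_range, ← YoungDiagram.mem_iff_lt_colLen] at hi hj
  obtain hij | rfl | hji := lt_trichotomy i j
  · exact absurd (hi.2.trans hj.2.symm) (T.col_strict hij hj.1).ne
  · rfl
  · exact absurd (hj.2.trans hi.2.symm) (T.col_strict hji hi.1).ne

theorem antitone_columnHeights : Antitone (columnHeights m T k) := by
  intro i j hij
  refine Nat.cast_le.2 (card_le_card fun r hr ↦ ?_)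
  simp only [mem_filter, mem_range, ← YoungDiagram.mem_iff_lt_colLen] at hr ⊢
  exact ⟨lam.up_left_mem le_rfl hij hr.1, (T.row_weak_of_le hij hr.1).trans_lt hr.2⟩

theorem columnHeights_eq_colLen (hN : ∀ r c, (r, c) ∈ lam → T r c < k) :
    columnHeights m T k = fun c : Fin m ↦ (lam.colLen c : ℤ) := by
  funext c
  rw [columnHeights, filter_true_of_mem, card_range]
  exact fun r hr ↦ hN r c (YoungDiagram.mem_iff_lt_colLen.2 (mem_range.1 hr))

theorem card_filter_eq_sum_card_filter_col (hm : lam.rowLen 0 ≤ m) :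
    #(lam.cells.filter fun x ↦ T x.1 x.2 = k) =
      ∑ c : Fin m, #{r ∈ range (lam.colLen c) | T r c = k} := by
  rw [card_eq_sum_card_fiberwise (f := Prod.snd) (t := range m), sum_range]
  · refine sum_congr rfl fun c _ ↦ card_nbij' Prod.fst (·, (c : ℕ)) ?_ ?_ ?_ ?_
    · rintro ⟨r, _⟩ hr
      simp only [coe_filter, mem_filter, Set.mem_ofPred_eq, mem_range, YoungDiagram.mem_cells,
        ← YoungDiagram.mem_iff_lt_colLen] at hr ⊢
      obtain ⟨hr, rfl⟩ := hr
      exact hr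
    · simp +contextual [Set.MapsTo, YoungDiagram.mem_iff_lt_colLen]
    · simp +contextual [Set.LeftInvOn]
    · simp [Set.LeftInvOn]
  · intro x hx
    exact mem_coe.2 (mem_range.2 (col_lt_of_rowLen_zero_le hm (mem_filter.1 hx).1))

theorem sum_columnHeights_succ (hm : lam.rowLen 0 ≤ m) :
    ∑ c, columnHeights m T (k + 1) c =
      ∑ c, columnHeights m T k c + #(lam.cells.filter fun x ↦ T x.1 x.2 = k) := by
  simp only [columnHeights_succ, sum_add_distrib, card_filter_eq_sum_card_filter_col hm,
    Nat.cast_sum]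

theorem isHeightChain_columnHeights (hm : lam.rowLen 0 ≤ m) (hcont : ∀ k ≥ N, cont k = 0)
    (hT : ∀ k, #(lam.cells.filter fun x ↦ T x.1 x.2 = k) = cont k) :
    IsHeightChain cont N (fun c : Fin m ↦ (lam.colLen c : ℤ)) (columnHeights m T) where
  zero := by ext; simp [columnHeights]
  antitone _ := antitone_columnHeights
  le_succ _ c := by simp [columnHeights_succ]
  succ_le k c := by
    rw [columnHeights_succ]
    exact add_le_add_right (Nat.cast_le.2 (card_filter_col_eq_le_one (c : ℕ))) _
  sum_succ k _ := by rw [sum_columnHeights_succ hm, hT]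
  eq_of_ge k hk := columnHeights_eq_colLen fun r c hrc ↦ by
    by_contra! hN
    have hempty := card_eq_zero.1 ((hT _).trans (hcont _ (hk.le.trans hN)))
    exact filter_eq_empty_iff.1 hempty hrc rfl

end columnHeights

/-- The entry in row `r` and column `c` of the tableau whose column heights are `H`: the least `k`
for which column `c` of the subtableau of entries less than `k + 1` has a cell in row `r`. Cells
outside of the shape satisfy no such condition and get the entry `sInf ∅ = 0`. -/
noncomputable def chainEntry (H : ℕ → Fin m → ℤ) (r c : ℕ) : ℕ :=
  sInf {k | ∃ hc : c < m, (r : ℤ) < H (k + 1) ⟨c, hc⟩}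

namespace IsHeightChain

variable {v : Fin m → ℤ}

theorem chainEntry_lt_iff (h : IsHeightChain cont N v H) {c : Fin m} (hr : r < v c) :
    chainEntry H r c < k ↔ r < H k c := by
  constructor
  · intro hk
    have hne : {k | ∃ hc : (c : ℕ) < m, (r : ℤ) < H (k + 1) ⟨c, hc⟩}.Nonempty :=
      ⟨N, c.2, by rwa [h.eq_of_ge _ N.le_succ]⟩
    obtain ⟨_, hlt⟩ := Nat.sInf_mem hne
    exact hlt.trans_le (h.monotone hk c)
  · intro hk
    obtain _ | k := k
    · simp only [h.zero, Pi.zero_apply] at hk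
      lia
    · exact Nat.lt_succ_of_le (Nat.sInf_le ⟨c.2, hk⟩)

/-- The semistandard tableau encoded by a height chain. -/
noncomputable def toTableau (hm : lam.rowLen 0 ≤ m)
    (h : IsHeightChain cont N (fun c : Fin m ↦ (lam.colLen c : ℤ)) H) :
    SemistandardYoungTableau lam where
  entry := chainEntry H
  row_weak' {r i j} hij hrj := by
    have hri := lam.up_left_mem le_rfl hij.le hrj
    lift i to Fin m using col_lt_of_rowLen_zero_le hm hri
    lift j to Fin m using col_lt_of_rowLen_zero_le hm hrj
    rw [YoungDiagram.mem_iff_lt_colLen] at hri hrj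
    rw [← Nat.lt_succ_iff, h.chainEntry_lt_iff (Nat.cast_lt.2 hri)]
    exact ((h.chainEntry_lt_iff (Nat.cast_lt.2 hrj)).1 (Nat.lt_succ_self _)).trans_le
      (h.antitone _ hij.le)
  col_strict' {r i j} hri hij := by
    have hrj := lam.up_left_mem hri.le le_rfl hij
    lift j to Fin m using col_lt_of_rowLen_zero_le hm hij
    rw [YoungDiagram.mem_iff_lt_colLen] at hij hrj
    rw [h.chainEntry_lt_iff (Nat.cast_lt.2 hrj)]
    have hlt := (h.chainEntry_lt_iff (Nat.cast_lt.2 hij)).1 (Nat.lt_succ_self _)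
    have hle := h.succ_le (chainEntry H i j) j
    rw [Pi.add_apply, Pi.one_apply] at hle
    lia
  zeros' {r c} hrc := by
    suffices {k | ∃ hc : c < m, (r : ℤ) < H (k + 1) ⟨c, hc⟩} = ∅ by
      rw [chainEntry, this, Nat.sInf_empty]
    refine Set.eq_empty_of_forall_notMem fun k ⟨hc, hr⟩ ↦ hrc ?_
    exact YoungDiagram.mem_iff_lt_colLen.2 (Nat.cast_lt.1 (hr.trans_le (h.le_last _ ⟨c, hc⟩)))

theorem columnHeights_toTableau (hm : lam.rowLen 0 ≤ m)
    (h : IsHeightChain cont N (fun c : Fin m ↦ (lam.colLen c : ℤ)) H) :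
    columnHeights m (h.toTableau hm) = H := by
  funext k c
  have hnonneg : 0 ≤ H k c := by simpa [h.zero] using h.monotone k.zero_le c
  have hle := h.le_last k c
  have hcol : {r ∈ range (lam.colLen c) | h.toTableau hm r c < k} = range (H k c).toNat := by
    ext r
    rw [mem_filter, mem_range, mem_range, Int.lt_toNat]
    refine ⟨fun hr ↦ (h.chainEntry_lt_iff (Nat.cast_lt.2 hr.1)).1 hr.2, fun hr ↦ ?_⟩
    have hlt := hr.trans_le hle
    exact ⟨Nat.cast_lt.1 hlt, (h.chainEntry_lt_iff hlt).2 hr⟩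
  rw [columnHeights, hcol, card_range, Int.toNat_of_nonneg hnonneg]

theorem card_filter_toTableau_eq (hm : lam.rowLen 0 ≤ m)
    (h : IsHeightChain cont N (fun c : Fin m ↦ (lam.colLen c : ℤ)) H) (hcont : ∀ k ≥ N, cont k = 0) (k : ℕ) :
    #(lam.cells.filter fun x ↦ h.toTableau hm x.1 x.2 = k) = cont k := by
  have hsum := sum_columnHeights_succ (T := h.toTableau hm) (k := k) hm
  rw [h.columnHeights_toTableau] at hsum
  obtain hk | hk := lt_or_ge k N
  · rwa [h.sum_succ k hk, add_right_inj, Nat.cast_inj, eq_comm] at hsum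
  · rw [h.eq_of_ge k hk, h.eq_of_ge _ (hk.trans k.le_succ), left_eq_add, Nat.cast_eq_zero] at hsum
    rw [hsum, hcont k hk]

end IsHeightChain

theorem kostka_eq_card_isHeightChain (hm : lam.rowLen 0 ≤ m) (hcont : ∀ k ≥ N, cont k = 0) :
    kostka lam cont =
      Nat.card {H // IsHeightChain cont N (fun c : Fin m ↦ (lam.colLen c : ℤ)) H} := by
  refine Nat.card_eq_of_bijective
    (fun T ↦ ⟨columnHeights m T.1, isHeightChain_columnHeights hm hcont T.2⟩) ⟨?_, ?_⟩
  · rintro ⟨T, hT⟩ ⟨T', hT'⟩ heq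
    have heights_eq : columnHeights m T = columnHeights m T' := congrArg Subtype.val heq
    refine Subtype.ext (SemistandardYoungTableau.ext fun r c ↦ ?_)
    by_cases hrc : (r, c) ∈ lam
    · lift c to Fin m using col_lt_of_rowLen_zero_le hm hrc
      exact eq_of_forall_gt_iff fun k ↦ by
        rw [← lt_columnHeights_iff hrc, heights_eq, lt_columnHeights_iff hrc]
    · rw [T.zeros hrc, T'.zeros hrc]
  · rintro ⟨H, h⟩
    exact ⟨⟨h.toTableau hm, h.card_filter_toTableau_eq hm hcont⟩,
      Subtype.ext (h.columnHeights_toTableau hm)⟩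

end Tableau

section Kostka

variable {m N : ℕ} {cont cont' : ℕ → ℕ} {lam lamhat : YoungDiagram}

theorem kostka_compl (hm : lam.rowLen 0 ≤ m) (hmhat : lamhat.rowLen 0 ≤ m)
    (hcol : ∀ c : Fin m, lam.colLen c + lamhat.colLen c.rev = N) (hcont : ∀ k ≥ N, cont k = 0)
    (hcont' : ∀ k ≥ N, cont' k = 0) (hadd : ∀ k < N, cont k + cont' k = m) :
    kostka lam cont = kostka lamhat cont' := by
  rw [kostka_eq_card_isHeightChain hm hcont, kostka_eq_card_isHeightChain hmhat hcont']
  exact card_isHeightChain_compl hadd fun c ↦ mod_cast hcol c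

theorem kostka_perm (hcont : ∀ k ≥ N, cont k = 0) (hcont' : ∀ k ≥ N, cont' k = 0)
    (σ : Equiv.Perm (Fin N)) (hσ : ∀ k : Fin N, cont' k = cont (σ k)) :
    kostka lam cont' = kostka lam cont := by
  rw [kostka_eq_card_isHeightChain le_rfl hcont, kostka_eq_card_isHeightChain le_rfl hcont']
  exact card_isHeightChain_perm (fun _ _ hij ↦ Nat.cast_le.2 (lam.colLen_anti _ _ hij)) σ hσ

theorem card_filter_add_card_filter_rev {μ μhat : Fin m → ℕ} {k l : ℕ}
    (hkl : k + l + 1 = N) (hμ : ∀ i, μ i + μhat i.rev = N) :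
    #{i | k + 1 ≤ μ i} + #{i | l + 1 ≤ μhat i} = m := by
  have hrev : #{i | l + 1 ≤ μhat i} = #{i | ¬ k + 1 ≤ μ i} := by
    refine card_equiv Fin.revPerm fun i ↦ ?_
    have := hμ i.rev
    rw [Fin.rev_rev] at this
    simp only [mem_filter_univ, Fin.revPerm_apply]
    lia
  rw [hrev, card_filter_add_card_filter_not, card_univ, Fintype.card_fin]

theorem kostka_rectangular_symmetry_general (hm : lam.rowLen 0 ≤ m) (hmhat : lamhat.rowLen 0 ≤ m)
    (hcol : ∀ c : Fin m, lam.colLen c + lamhat.colLen c.rev = N) {μ μhat : Fin m → ℕ}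
    (hμ : ∀ i, μ i + μhat i.rev = N) :
    kostka lam (fun k ↦ #{i | k + 1 ≤ μ i}) = kostka lamhat (fun k ↦ #{i | k + 1 ≤ μhat i}) := by
  have hle (i : Fin m) : μ i ≤ N := (hμ i).le.trans' (Nat.le_add_right _ _)
  have hlehat (i : Fin m) : μhat i ≤ N := by simpa using (hμ i.rev).le.trans' (Nat.le_add_left _ _)
  have hcont (ν : Fin m → ℕ) (hν : ∀ i, ν i ≤ N) (k : ℕ) (hk : k ≥ N) : #{i | k + 1 ≤ ν i} = 0 :=
    card_eq_zero.2 (filter_eq_empty_iff.2 fun i _ ↦ ((hν i).trans_lt (Nat.lt_succ_of_le hk)).not_ge)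
  trans kostka lamhat fun k ↦ if k < N then #{i | N - (k + 1) + 1 ≤ μhat i} else 0
  · exact kostka_compl hm hmhat hcol (hcont μ hle) (fun k hk ↦ if_neg hk.not_gt) fun k hk ↦ by
      rw [if_pos hk, card_filter_add_card_filter_rev (by lia) hμ]
  · exact kostka_perm (hcont μhat hlehat) (fun k hk ↦ if_neg hk.not_gt) Fin.revPerm fun k ↦ by
      rw [if_pos k.2, Fin.revPerm_apply, Fin.val_rev]

end Kostka

section SumShape

variable {n : ℕ} {w : ℕ → ℕ} {lam : YoungDiagram}

theorem colLen_eq_of_mem_iff_lt {f : ℕ → ℕ} (hlam : ∀ r c : ℕ, (r, c) ∈ lam ↔ r < f c) (c : ℕ) :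
    lam.colLen c = f c :=
  eq_of_forall_lt_iff fun r ↦ by rw [← YoungDiagram.mem_iff_lt_colLen, hlam]

theorem rowLen_zero_le_of_mem_iff_lt_sum
    (hlam : ∀ r c : ℕ, (r, c) ∈ lam ↔ r < ∑ j ∈ Icc (c + 1) n, w j) : lam.rowLen 0 ≤ n := by
  by_contra! hn
  rw [← YoungDiagram.mem_iff_lt_rowLen, hlam, Icc_eq_empty (by lia), sum_empty] at hn
  exact hn.false

theorem sum_Icc_add_sum_Icc_rev {M : Type*} [AddCommMonoid M] (w : ℕ → M) (c : Fin (n + 1)) :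
    ∑ j ∈ Icc (c + 1 : ℕ) n, w j + ∑ j ∈ Icc (c.rev + 1 : ℕ) n, w (n + 1 - j) =
      ∑ j ∈ Icc 1 n, w j := by
  have hrefl : ∑ j ∈ Icc (c.rev + 1 : ℕ) n, w (n + 1 - j) = ∑ j ∈ Icc 1 (c : ℕ), w j := by
    refine sum_nbij' (n + 1 - ·) (n + 1 - ·) ?_ ?_ ?_ ?_ ?_ <;> simp [Fin.val_rev] <;> lia
  have hsplit := sum_Ioc_consecutive w c.1.zero_le (Nat.lt_succ_iff.1 c.2)
  rw [hrefl, add_comm]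
  simpa only [← Icc_add_one_left_eq_Ioc, zero_add] using hsplit

end SumShape

/-- Rectangular symmetry of Kostka numbers: for the partitions `λ = (i^{w_i})_{1≤i≤n}` and
`λ̂ = (i^{w_{n+1-i}})_{1≤i≤n}` (complementary within an `(n+1) × (Σ w_i)` rectangle), and
for transpose partitions `μ'`, `μ̂'` of complementary compositions `μ`, `μ̂` (i.e.
`μ_i + μ̂_{n-i+2} = Σ_j w_j`), the Kostka numbers agree: `K_{λ,μ'} = K_{λ̂,μ̂'}`.
Here `λ` is encoded by its cells, `(r, c) ∈ λ ↔ r < Σ_{j≥c+1} w_j`, the content of `μ'`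
assigns to the (0-indexed) value `k` the multiplicity `μ'_{k+1} = #{i : μ_i ≥ k+1}`. -/
theorem kostka_rectangular_symmetry
    (n : ℕ) (w : ℕ → ℕ)
    (lam lamhat : YoungDiagram)
    (hlam : ∀ r c : ℕ, (r, c) ∈ lam ↔ r < ∑ j ∈ Icc (c + 1) n, w j)
    (hlamhat : ∀ r c : ℕ, (r, c) ∈ lamhat ↔ r < ∑ j ∈ Icc (c + 1) n, w (n + 1 - j))
    (μ μhat : Fin (n + 1) → ℕ)
    (hμ : ∀ i, μ i ≤ ∑ j ∈ Icc 1 n, w j)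
    (hrel : ∀ i : Fin (n + 1), μ i + μhat i.rev = ∑ j ∈ Icc 1 n, w j) :
    kostka lam (fun k => (univ.filter (fun i : Fin (n + 1) => k + 1 ≤ μ i)).card)
      = kostka lamhat (fun k => (univ.filter (fun i : Fin (n + 1) => k + 1 ≤ μhat i)).card) := by
  refine kostka_rectangular_symmetry_general
    ((rowLen_zero_le_of_mem_iff_lt_sum hlam).trans n.le_succ)
    ((rowLen_zero_le_of_mem_iff_lt_sum hlamhat).trans n.le_succ) (fun c ↦ ?_) hrel
  rw [colLen_eq_of_mem_iff_lt hlam, colLen_eq_of_mem_iff_lt hlamhat, sum_Icc_add_sum_Icc_rev]
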